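/- arXiv:math/9810157 — 4 statements merged into one kernel-verified Lean document; each statement's English description precedes it below -/
import Mathlib

section
/- Let f : U → Im ℍ be a conformal immersion with unit normal n := f_x·f_y/(|f_x|·|f_y|). Then: (a) at every point f_x·(f_y)⁻¹ + f_y·(f_x)⁻¹ = 0, so the ℍ-valued 1-form ω := (f_x)⁻¹ dx − (f_y)⁻¹ dy satisfies df ∧ ω = 0 pointwise; and (b) ω is closed, i.e. ∂_y((f_x)⁻¹) + ∂_x((f_y)⁻¹) = 0 on U, if and only if ⟨f_xy, n⟩ = 0 on U (i.e. (x,y) are conformal curvature-line coordinates). Consequently, when ⟨f_xy, n⟩ ≡ 0, any local primitive f★ of ω forms a Christoffel pair with f: f_x·f★_y = f_y·f★_x. -/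
/-!
Write `a = f_x`, `b = f_y`, `c = f_xy` at a point of `U`, and `N = |a|² = |b|² > 0`. All three are
imaginary quaternions, so conformality reads `a² = b² = -N` and `ab = -ba`; in particular
`a⁻¹ = -a/N` and `b⁻¹ = -b/N`, which gives (a), and (c) is (a) applied to a primitive of `ω`.

For (b), differentiating the inverses and using the symmetry of second derivatives gives
`∂_y(a⁻¹) + ∂_x(b⁻¹) = -(a⁻¹ c a⁻¹ + b⁻¹ c b⁻¹) = -(a c a + b c b)/N²`
(`inv_sandwich`, `fderiv_inv_apply`). The identity `(a c a + b c b)(ab) = N (c(ab) + (ab)c)`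
(`sandwich_mul`) together with `c(ab) + (ab)c = -2⟨c, ab⟩` (`anticomm_eq_inner`) and `n = ab/N`
shows that this vanishes exactly when `⟨c, n⟩ = 0`. The equivalence thus holds at each point
separately.
-/


/- STATEMENT 2: For a conformal immersion f : U → Im ℍ with unit normal n:
(a) f_x·(f_y)⁻¹ + f_y·(f_x)⁻¹ = 0 pointwise, so ω := (f_x)⁻¹dx − (f_y)⁻¹dy
    satisfies df ∧ ω = 0 pointwise;
(b) ω is closed, i.e. ∂_y((f_x)⁻¹) + ∂_x((f_y)⁻¹) = 0 on U, iff ⟨f_xy, n⟩ = 0 on U;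
(c) consequently, when ⟨f_xy, n⟩ ≡ 0, any local primitive f★ of ω forms a
    Christoffel pair with f: f_x·f★_y = f_y·f★_x. -/

noncomputable section
open scoped ContDiff Quaternion

abbrev HQ : Type := Quaternion ℝ

noncomputable def pdx {E : Type} [NormedAddCommGroup E] [NormedSpace ℝ E]
    (f : ℝ × ℝ → E) (p : ℝ × ℝ) : E := fderiv ℝ f p (1, 0)

noncomputable def pdy {E : Type} [NormedAddCommGroup E] [NormedSpace ℝ E]
    (f : ℝ × ℝ → E) (p : ℝ × ℝ) : E := fderiv ℝ f p (0, 1)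

/-- The unit normal of a conformal immersion. -/
noncomputable def unormal (f : ℝ × ℝ → HQ) (p : ℝ × ℝ) : HQ :=
  (pdx f p * pdy f p) / ((‖pdx f p‖ * ‖pdy f p‖ : ℝ) : HQ)

lemma mul_self_of_im {a : HQ} (ha : a.re = 0) : a * a = -((‖a‖ * ‖a‖) • (1 : HQ)) := by
  rw [← Quaternion.normSq_eq_norm_mul_self, Quaternion.normSq_def']
  ext <;> simp [ha] <;> ring

lemma anticomm_of_im {a b : HQ} (ha : a.re = 0) (hb : b.re = 0) (hab : (a * star b).re = 0) :
    b * a = -(a * b) := by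
  simp [ha, hb] at hab
  ext <;> simp [ha, hb] <;> linarith

/-- For imaginary `b`, `c` the anticommutator `bc + cb = -2⟨b, c⟩` is real, hence central. -/
lemma anticomm_central {b c : HQ} (hb : b.re = 0) (hc : c.re = 0) (a : HQ) :
    a * (b * c + c * b) = (b * c + c * b) * a := by
  ext <;> simp [hb, hc] <;> ring

lemma anticomm_eq_inner {c m : HQ} (hc : c.re = 0) (hm : m.re = 0) :
    c * m + m * c = (-2 * (c * star m).re) • (1 : HQ) := by
  ext <;> simp [hc, hm] <;> ring

lemma inv_of_mul_self {a : HQ} {N : ℝ} (hN : N ≠ 0) (ha : a * a = -(N • (1 : HQ))) :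
    a⁻¹ = -(N⁻¹ • a) := by
  apply inv_eq_of_mul_eq_one_right
  rw [mul_neg, mul_smul_comm, ha, smul_neg, neg_neg, smul_smul, inv_mul_cancel₀ hN, one_smul]

lemma inv_sandwich {a c : HQ} {N : ℝ} (hN : N ≠ 0) (ha : a * a = -(N • (1 : HQ))) :
    a⁻¹ * c * a⁻¹ = (N⁻¹ * N⁻¹) • (a * c * a) := by
  rw [inv_of_mul_self hN ha]
  simp [smul_smul]

/-- The key identity: it turns the closedness defect `aca + bcb` into the inner product of `c`
with the normal direction `ab`. -/
lemma sandwich_mul {a b c : HQ} {N : ℝ} (hb : b.re = 0) (hc : c.re = 0)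
    (haa : a * a = -(N • (1 : HQ))) (hbb : b * b = -(N • (1 : HQ))) (hba : b * a = -(a * b)) :
    (a * c * a + b * c * b) * (a * b) = N • (c * (a * b) + a * b * c) := by
  have h1 : a * c * a * (a * b) = -(N • (a * c * b)) := by
    calc a * c * a * (a * b) = a * c * (a * a) * b := by noncomm_ring
      _ = _ := by rw [haa]; simp
  have h2 : b * c * b * (a * b) = N • (b * c * a) := by
    calc b * c * b * (a * b) = b * c * ((b * a) * b) := by noncomm_ring
      _ = -(b * c * (a * (b * b))) := by rw [hba]; noncomm_ring
      _ = _ := by rw [hbb]; simp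
  have h3 : a * b * c + a * c * b = b * c * a + c * (b * a) := by
    have := anticomm_central hb hc a
    calc a * b * c + a * c * b = a * (b * c + c * b) := by noncomm_ring
      _ = _ := by rw [this]; noncomm_ring
  rw [add_mul, h1, h2, ← smul_neg, ← smul_add]
  congr 1
  rw [hba] at h3
  rw [eq_comm, ← sub_eq_zero] at h3 ⊢
  rw [← neg_eq_zero, ← h3]
  noncomm_ring

/-- Pointwise form of the equivalence in (b). -/
lemma closed_iff_inner {a b c : HQ} (ha : a.re = 0) (hb : b.re = 0) (hc : c.re = 0)
    (hn : ‖a‖ = ‖b‖) (hpos : 0 < ‖a‖) (hab : (a * star b).re = 0) :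
    -(a⁻¹ * c * a⁻¹) + -(b⁻¹ * c * b⁻¹) = 0 ↔
      (c * star ((a * b) / ((‖a‖ * ‖b‖ : ℝ) : HQ))).re = 0 := by
  have haa := mul_self_of_im ha
  have hbb := mul_self_of_im hb
  rw [← hn] at hbb ⊢
  have hN : ‖a‖ * ‖a‖ ≠ 0 := by positivity
  set N := ‖a‖ * ‖a‖
  have hba := anticomm_of_im ha hb hab
  have hm : (a * b).re = 0 := by
    simp [ha, hb] at hab ⊢
    linarith
  have hab0 : a * b ≠ 0 := by
    refine mul_ne_zero (norm_pos_iff.1 hpos) (norm_pos_iff.1 (hn ▸ hpos))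
  have hnorm : (c * star ((a * b) / (N : HQ))).re = N⁻¹ * (c * star (a * b)).re := by
    rw [div_eq_mul_inv, ← Quaternion.coe_inv, Quaternion.mul_coe_eq_smul, Quaternion.star_smul,
      mul_smul_comm]
    simp
  have key := sandwich_mul hb hc haa hbb hba
  rw [anticomm_eq_inner hc hm, smul_smul] at key
  rw [hnorm, inv_sandwich hN haa, inv_sandwich hN hbb, ← neg_add, neg_eq_zero, ← smul_add,
    smul_eq_zero_iff_right (mul_ne_zero (inv_ne_zero hN) (inv_ne_zero hN)),
    mul_eq_zero_iff_left (inv_ne_zero hN), ← mul_eq_zero_iff_right hab0, key]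
  simp [hN]

lemma fderiv_inv_apply {g : ℝ × ℝ → HQ} {p : ℝ × ℝ} (hg : DifferentiableAt ℝ g p)
    (h0 : g p ≠ 0) (v : ℝ × ℝ) :
    fderiv ℝ (fun q => (g q)⁻¹) p v = -((g p)⁻¹ * fderiv ℝ g p v * (g p)⁻¹) := by
  have h := (hasFDerivAt_inv' (𝕜 := ℝ) h0).comp p hg.hasFDerivAt
  have h' : HasFDerivAt (fun q => (g q)⁻¹) _ p := h
  rw [h'.fderiv]
  simp

/-- A derivative of a map with imaginary values is imaginary. -/
lemma re_fderiv_eq_zero {g : ℝ × ℝ → HQ} {U : Set (ℝ × ℝ)} (hU : IsOpen U)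
    (hre : ∀ q ∈ U, (g q).re = 0) {p : ℝ × ℝ} (hp : p ∈ U) (hg : DifferentiableAt ℝ g p)
    (v : ℝ × ℝ) : (fderiv ℝ g p v).re = 0 := by
  let L : HQ →L[ℝ] ℝ :=
    ⟨(show HQ →ₗ[ℝ] ℝ from QuaternionAlgebra.reₗ _ _ _), Quaternion.continuous_re⟩
  have h := L.hasFDerivAt.comp p hg.hasFDerivAt
  have h0 : HasFDerivAt (L ∘ g) (0 : ℝ × ℝ →L[ℝ] ℝ) p :=
    (hasFDerivAt_const (0 : ℝ) p).congr_of_eventuallyEq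
      (Filter.eventuallyEq_of_mem (hU.mem_nhds hp) hre)
  exact DFunLike.congr_fun (h.unique h0) v

theorem christoffel_one_form_of_conformal_immersion
    (U : Set (ℝ × ℝ)) (hU : IsOpen U) (f : ℝ × ℝ → HQ)
    (hf : ContDiffOn ℝ ∞ f U) (hfIm : ∀ p ∈ U, (f p).re = 0)
    (hconf : ∀ p ∈ U, ‖pdx f p‖ = ‖pdy f p‖ ∧ 0 < ‖pdx f p‖ ∧
      (pdx f p * star (pdy f p)).re = 0) :
    -- (a)
    (∀ p ∈ U, pdx f p * (pdy f p)⁻¹ + pdy f p * (pdx f p)⁻¹ = 0 ∧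
      pdx f p * (-(pdy f p)⁻¹) = pdy f p * (pdx f p)⁻¹) ∧
    -- (b)
    ((∀ p ∈ U, pdy (fun q => (pdx f q)⁻¹) p + pdx (fun q => (pdy f q)⁻¹) p = 0) ↔
      (∀ p ∈ U, (pdx (fun q => pdy f q) p * star (unormal f p)).re = 0)) ∧
    -- (c)
    ((∀ p ∈ U, (pdx (fun q => pdy f q) p * star (unormal f p)).re = 0) →
      ∀ (fs : ℝ × ℝ → HQ) (V : Set (ℝ × ℝ)), IsOpen V → V ⊆ U →
        (∀ p ∈ V, pdx fs p = (pdx f p)⁻¹ ∧ pdy fs p = -(pdy f p)⁻¹) →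
        ∀ p ∈ V, pdx f p * pdy fs p = pdy f p * pdx fs p) := by
  have hcd : ∀ p ∈ U, ContDiffAt ℝ ∞ f p := fun p hp => hf.contDiffAt (hU.mem_nhds hp)
  have hd : ∀ p ∈ U, DifferentiableAt ℝ f p := fun p hp => (hcd p hp).differentiableAt (by simp)
  have hd2 : ∀ p ∈ U, DifferentiableAt ℝ (fderiv ℝ f) p := fun p hp =>
    ((hcd p hp).fderiv_right (m := 1) (by norm_cast)).differentiableAt (by simp)
  have hdv : ∀ p ∈ U, ∀ v, DifferentiableAt ℝ (fun q => fderiv ℝ f q v) p := fun p hp v =>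
    (hd2 p hp).clm_apply (differentiableAt_const v)
  have hdd : ∀ p ∈ U, ∀ v w, fderiv ℝ (fun q => fderiv ℝ f q v) p w
      = fderiv ℝ (fderiv ℝ f) p w v := by
    intro p hp v w
    rw [fderiv_clm_apply (hd2 p hp) (differentiableAt_const v)]
    simp
  have hre : ∀ p ∈ U, ∀ v, (fderiv ℝ f p v).re = 0 := fun p hp v =>
    re_fderiv_eq_zero hU hfIm hp (hd p hp) v
  have ha : ∀ p ∈ U, pdx f p * (pdy f p)⁻¹ + pdy f p * (pdx f p)⁻¹ = 0 := by
    intro p hp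
    obtain ⟨hn, hpos, hab⟩ := hconf p hp
    have hxx := mul_self_of_im (hre p hp (1, 0))
    have hyy := mul_self_of_im (hre p hp (0, 1))
    have hyx := anticomm_of_im (hre p hp (1, 0)) (hre p hp (0, 1)) hab
    change pdx f p * pdx f p = -((‖pdx f p‖ * ‖pdx f p‖) • (1 : HQ)) at hxx
    change pdy f p * pdy f p = -((‖pdy f p‖ * ‖pdy f p‖) • (1 : HQ)) at hyy
    change pdy f p * pdx f p = -(pdx f p * pdy f p) at hyx
    rw [← hn] at hyy
    have hN : ‖pdx f p‖ * ‖pdx f p‖ ≠ 0 := by positivity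
    rw [inv_of_mul_self hN hxx, inv_of_mul_self hN hyy, mul_neg, mul_neg, mul_smul_comm,
      mul_smul_comm, hyx]
    simp
  have ha' : ∀ p ∈ U, pdx f p * (-(pdy f p)⁻¹) = pdy f p * (pdx f p)⁻¹ := by
    intro p hp
    rw [mul_neg]
    exact neg_eq_of_add_eq_zero_right (ha p hp)
  refine ⟨fun p hp => ⟨ha p hp, ha' p hp⟩, forall₂_congr fun p hp => ?_, ?_⟩
  · obtain ⟨hn, hpos, hab⟩ := hconf p hp
    have hx0 : pdx f p ≠ 0 := norm_pos_iff.1 hpos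
    have hy0 : pdy f p ≠ 0 := norm_pos_iff.1 (hn ▸ hpos)
    have hsymm : fderiv ℝ (fun q => pdx f q) p (0, 1) = pdx (fun q => pdy f q) p := by
      refine (hdd p hp (1, 0) (0, 1)).trans (Eq.trans ?_ (hdd p hp (0, 1) (1, 0)).symm)
      exact (hcd p hp).isSymmSndFDerivAt
        (by rw [minSmoothness_of_isRCLikeNormedField]; norm_cast) (0, 1) (1, 0)
    have e1 : pdy (fun q => (pdx f q)⁻¹) p
        = -((pdx f p)⁻¹ * pdx (fun q => pdy f q) p * (pdx f p)⁻¹) :=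
      (fderiv_inv_apply (hdv p hp (1, 0)) hx0 (0, 1)).trans (by rw [← hsymm]; rfl)
    have e2 : pdx (fun q => (pdy f q)⁻¹) p
        = -((pdy f p)⁻¹ * pdx (fun q => pdy f q) p * (pdy f p)⁻¹) :=
      fderiv_inv_apply (hdv p hp (0, 1)) hy0 (1, 0)
    have hc : (pdx (fun q => pdy f q) p).re = 0 :=
      re_fderiv_eq_zero hU (fun q hq => hre q hq (0, 1)) hp (hdv p hp (0, 1)) (1, 0)
    rw [e1, e2]
    exact closed_iff_inner (hre p hp (1, 0)) (hre p hp (0, 1)) hc hn hpos hab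
  · intro _ fs V _ hVU hfs p hp
    rw [(hfs p hp).1, (hfs p hp).2]
    exact ha' p (hVU hp)


end
end

section
/- (Existence of the spectral frame.) Let f, f★ : U → Im ℍ be smooth with f_x·f★_y = f_y·f★_x on U (a Christoffel pair), let λ ∈ ℝ and p₀ ∈ U. Define A, B : U → M₂(ℍ) by A := [[0, λ·f★_x],[f_x, 0]] and B := [[0, λ·f★_y],[f_y, 0]]. Then there exist an open neighbourhood V ⊆ U of p₀ and a smooth map F : V → M₂(ℍ) with F(p₀) = 1 (the identity matrix), F(p) invertible for every p ∈ V, and ∂_x F = F·A, ∂_y F = F·B on V. (F is a frame integrating the loop of flat connections Φ_λ = [[0, λ df★],[df, 0]]; its first column defines the T_λ-transform of f.) -/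
/-!
Write `P = [[0, λ f★], [f, 0]]`. The system is `dF = F · dP`, with values in the Banach algebra
`M₂(ℍ)`. It is integrable: the connection form `Φ = dP` is closed (symmetry of second derivatives)
and its values commute at each point. Indeed the off-diagonal blocks of `dP(u) dP(v)` vanish, the
lower diagonal block is symmetric in `u, v` by the Christoffel relation, and the upper one by the
quaternionic conjugate of that relation, the derivatives of `f` and `f★` being imaginary
(`christoffel_apply`).

Existence is proved for a form `Φ` on a normed space `E` with values in any Banach algebra `R`,
under the flatness condition `dΦ(u, v) + [Φ(u), Φ(v)] = 0` (`exists_frame`). Centre the coordinates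
at the base point. For `p` near `0` let `g_p` solve the ODE along the ray to `p`,
`g_p'(t) = g_p(t) Φ_{tp}(p)`, `g_p(0) = 1`, and put `F(p) = g_p(1)`. By flatness,
`D(t) = g_{p+h}(t) - g_p(t) (1 + t Φ_{tp}(h))` satisfies `D' = D · Φ_{tp}(p) + O(|h|²)` and
`D(0) = 0`, so Grönwall's inequality gives `D(1) = O(|h|²)`, that is `dF = F Φ` (`frame_estimate`).
Smoothness of `F` follows by bootstrapping this equation, and invertibility near the base point
holds because the units of `R` form an open set.
-/

/- STATEMENT 8 (Existence of the spectral frame): For a Christoffel pair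
f, f★ : U → Im ℍ, λ ∈ ℝ and p₀ ∈ U, with A = [[0, λ·f★_x],[f_x, 0]] and
B = [[0, λ·f★_y],[f_y, 0]], there exist a neighbourhood V of p₀ and a smooth
pointwise-invertible F : V → M₂(ℍ) with F(p₀) = 1, ∂_x F = F·A and ∂_y F = F·B. -/

noncomputable section
open scoped ContDiff Quaternion

open Set Metric Filter Topology

/-! ### Estimates and existence for linear equations on `[0, 1]` -/

/-- Grönwall's inequality on `[0, 1]` with rate `1`; the constants come from `e ≤ 3`. -/
lemma norm_le_of_deriv_le {E : Type*} [NormedAddCommGroup E] [NormedSpace ℝ E]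
    {g g' : ℝ → E} {δ ε : ℝ} (hε : 0 ≤ ε)
    (hg : ∀ t ∈ Icc (0 : ℝ) 1, HasDerivWithinAt g (g' t) (Icc 0 1) t)
    (h0 : ‖g 0‖ ≤ δ) (hb : ∀ t ∈ Icc (0 : ℝ) 1, ‖g' t‖ ≤ ‖g t‖ + ε) :
    ∀ t ∈ Icc (0 : ℝ) 1, ‖g t‖ ≤ 3 * δ + 2 * ε := by
  intro t ht
  have hδ : 0 ≤ δ := (norm_nonneg _).trans h0
  have h := norm_le_gronwallBound_of_norm_deriv_right_le (f := g) (f' := g') (δ := δ) (K := 1)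
    (ε := ε) (a := 0) (b := 1) (fun s hs => (hg s hs).continuousWithinAt)
    (fun s hs => (hg s ⟨hs.1, hs.2.le⟩).mono_of_mem_nhdsWithin (Icc_mem_nhdsGE_of_mem hs)) h0
    (fun s hs => by simpa using hb s ⟨hs.1, hs.2.le⟩) t ht
  rw [gronwallBound_of_K_ne_0 one_ne_zero] at h
  have he : Real.exp t ≤ 3 :=
    (Real.exp_le_exp.2 ht.2).trans (Real.exp_one_lt_d9.le.trans (by norm_num))
  simp only [one_mul, sub_zero, div_one] at h
  nlinarith

variable {E R : Type*} [NormedAddCommGroup E] [NormedSpace ℝ E]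
  [NormedRing R] [NormedAlgebra ℝ R] [NormOneClass R]

/-- Picard–Lindelöf for `g' = g c` on all of `[0, 1]`: the bound on `c` keeps the solution in the
closed unit ball about `1`, so no continuation argument is needed. -/
lemma exists_linear_ode [CompleteSpace R] {c : ℝ → R} (hc : ContinuousOn c (Icc 0 1))
    (hb : ∀ t ∈ Icc (0 : ℝ) 1, ‖c t‖ ≤ 1 / 4) :
    ∃ g : ℝ → R, g 0 = 1 ∧
      ∀ t ∈ Icc (0 : ℝ) 1, HasDerivWithinAt g (g t * c t) (Icc 0 1) t := by
  have hP : IsPicardLindelof (fun t x => x * c t) (tmin := 0) (tmax := 1)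
      ⟨0, by simp⟩ (1 : R) 1 0 1 1 := by
    refine ⟨fun t ht => ?_, fun x _ => continuousOn_const.mul hc, fun t ht x hx => ?_, by simp⟩
    · refine LipschitzOnWith.of_dist_le_mul fun x _ y _ => ?_
      rw [dist_eq_norm, dist_eq_norm, ← sub_mul, NNReal.coe_one, one_mul]
      exact (norm_mul_le _ _).trans (mul_le_of_le_one_right (norm_nonneg _)
        ((hb t ht).trans (by norm_num)))
    · have hx2 : ‖x‖ ≤ 2 := by
        have h1 : ‖x - 1‖ ≤ 1 := by simpa [dist_eq_norm] using hx
        have h2 := norm_add_le (x - 1) 1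
        rw [sub_add_cancel, norm_one] at h2
        linarith
      have := norm_mul_le x (c t)
      have := hb t ht
      simp only [NNReal.coe_one]
      nlinarith [norm_nonneg x, norm_nonneg (c t)]
  exact hP.exists_eq_forall_mem_Icc_hasDerivWithinAt₀

/-! ### Integration of flat connection forms -/

/-- A `C²` map near `0` satisfies, on all small balls and with one constant `M`, bounds on its value
and derivative and a quadratic first-order Taylor estimate. -/
lemma exists_taylor_bound {F : Type*} [NormedAddCommGroup F] [NormedSpace ℝ F] {Φ : E → F}
    (hΦ : ContDiffAt ℝ 2 Φ 0) :
    ∃ M : ℝ, 0 < M ∧ ∀ᶠ r in 𝓝[>] (0 : ℝ), ∀ q ∈ ball (0 : E) r, DifferentiableAt ℝ Φ q ∧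
      ‖Φ q‖ ≤ M ∧ ‖fderiv ℝ Φ q‖ ≤ M ∧
      ∀ q' ∈ ball (0 : E) r, ‖Φ q' - Φ q - fderiv ℝ Φ q (q' - q)‖ ≤ M * ‖q' - q‖ ^ 2 := by
  have hd : ContDiffAt ℝ 1 (fderiv ℝ Φ) 0 := hΦ.fderiv_right (by norm_num)
  obtain ⟨K, s, hs, hK⟩ := hd.exists_lipschitzOnWith
  have e1 : ∀ᶠ q in 𝓝 (0 : E), ContDiffAt ℝ 2 Φ q := hΦ.eventually (by simp)
  have e2 : ∀ᶠ q in 𝓝 (0 : E), ‖Φ q‖ < ‖Φ 0‖ + 1 :=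
    hΦ.continuousAt.norm.eventually_lt_const (by linarith)
  have e3 : ∀ᶠ q in 𝓝 (0 : E), ‖fderiv ℝ Φ q‖ < ‖fderiv ℝ Φ 0‖ + 1 :=
    hd.continuousAt.norm.eventually_lt_const (by linarith)
  obtain ⟨ε, hε, H⟩ := Metric.eventually_nhds_iff_ball.1 ((e1.and e2).and (e3.and hs))
  refine ⟨‖Φ 0‖ + ‖fderiv ℝ Φ 0‖ + 1 + K, by positivity, ?_⟩
  filter_upwards [Ioo_mem_nhdsGT hε] with r hr
  have hsub : ball (0 : E) r ⊆ ball 0 ε := ball_subset_ball hr.2.le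
  intro q hq
  obtain ⟨⟨h1, h2⟩, h3, h4⟩ := H q (hsub hq)
  have hK0 : (0 : ℝ) ≤ K := K.2
  refine ⟨h1.differentiableAt (by norm_num), ?_, ?_, fun q' hq' => ?_⟩
  · linarith [norm_nonneg (fderiv ℝ Φ 0)]
  · linarith [norm_nonneg (Φ 0)]
  -- the segment from `q` to `q'` stays in the ball, where the derivative is `K`-Lipschitz
  have hseg : segment ℝ q q' ⊆ ball 0 r := (convex_ball _ _).segment_subset hq hq'
  have := (convex_segment q q').norm_image_sub_le_of_norm_fderiv_le' (𝕜 := ℝ) (f := Φ)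
    (φ := fderiv ℝ Φ q) (C := K * ‖q' - q‖)
    (fun x hx => (H x (hsub (hseg hx))).1.1.differentiableAt (by norm_num))
    (fun x hx => by
      refine (hK.norm_sub_le (H x (hsub (hseg hx))).2.2 h4).trans ?_
      gcongr
      exact norm_sub_le_of_mem_segment hx)
    (left_mem_segment ℝ q q') (right_mem_segment ℝ q q')
  refine this.trans ?_
  rw [mul_assoc, ← sq]
  gcongr
  linarith [norm_nonneg (Φ 0), norm_nonneg (fderiv ℝ Φ 0)]

/-- The quadratic estimate behind `dF = F Φ`: if `g` and `G` solve the radial equations along the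
rays to `p` and `p'`, then `G 1` agrees with `g 1 * (1 + Φ p (p' - p))` up to `O(‖p' - p‖²)`. -/
lemma frame_estimate {Φ : E → E →L[ℝ] R} {M r : ℝ} (hM : 0 < M) (hr1 : r ≤ 1) (hrM : M * r ≤ 1 / 4)
    (H : ∀ q ∈ ball (0 : E) r, DifferentiableAt ℝ Φ q ∧
      ‖Φ q‖ ≤ M ∧ ‖fderiv ℝ Φ q‖ ≤ M ∧
      ∀ q' ∈ ball (0 : E) r, ‖Φ q' - Φ q - fderiv ℝ Φ q (q' - q)‖ ≤ M * ‖q' - q‖ ^ 2)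
    (hflat : ∀ q ∈ ball (0 : E) r, ∀ u v,
      fderiv ℝ Φ q u v + Φ q u * Φ q v = fderiv ℝ Φ q v u + Φ q v * Φ q u)
    {p p' : E} (hp : p ∈ ball (0 : E) r) (hp' : p' ∈ ball (0 : E) r)
    {g G : ℝ → R} (g0 : g 0 = 1) (G0 : G 0 = 1)
    (hg : ∀ t ∈ Icc (0 : ℝ) 1, HasDerivWithinAt g (g t * Φ (t • p) p) (Icc 0 1) t)
    (hG : ∀ t ∈ Icc (0 : ℝ) 1, HasDerivWithinAt G (G t * Φ (t • p') p') (Icc 0 1) t) :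
    ‖G 1 - g 1 - g 1 * Φ p (p' - p)‖ ≤ (12 * M + 144 * M ^ 2) * ‖p' - p‖ ^ 2 := by
  have hball : ∀ {q : E}, q ∈ ball (0 : E) r → ∀ {t : ℝ}, t ∈ Icc (0 : ℝ) 1 →
      t • q ∈ ball (0 : E) r := by
    intro q hq t ht
    rw [mem_ball_zero_iff] at hq ⊢
    rw [norm_smul, Real.norm_eq_abs, abs_of_nonneg ht.1]
    exact (mul_le_of_le_one_left (norm_nonneg _) ht.2).trans_lt hq
  have hc : ∀ {q : E}, q ∈ ball (0 : E) r → ∀ {t : ℝ}, t ∈ Icc (0 : ℝ) 1 →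
      ‖Φ (t • q) q‖ ≤ 1 / 4 := by
    intro q hq t ht
    have h1 := (Φ (t • q)).le_of_opNorm_le (H _ (hball hq ht)).2.1 q
    rw [mem_ball_zero_iff] at hq
    nlinarith
  have hbd : ∀ {q : E} {k : ℝ → R}, q ∈ ball (0 : E) r → k 0 = 1 →
      (∀ t ∈ Icc (0 : ℝ) 1, HasDerivWithinAt k (k t * Φ (t • q) q) (Icc 0 1) t) →
      ∀ t ∈ Icc (0 : ℝ) 1, ‖k t‖ ≤ 3 := by
    intro q k hq k0 hk t ht
    have := norm_le_of_deriv_le (δ := 1) le_rfl hk (by simp [k0]) (fun t ht => by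
      have := norm_mul_le (k t) (Φ (t • q) q)
      have := hc hq ht
      nlinarith [norm_nonneg (k t)]) t ht
    linarith
  set h := p' - p with hh
  have hpn : ‖p‖ ≤ 1 := (mem_ball_zero_iff.1 hp).le.trans hr1
  have hpn' : ‖p'‖ ≤ 1 := (mem_ball_zero_iff.1 hp').le.trans hr1
  have hhn : ‖h‖ ≤ 2 := (norm_sub_le _ _).trans (by linarith)
  have hp'e : p' = p + h := by simp [hh]
  -- first-order variation of the coefficient `Φ (t • p) p` in the direction `h`
  let X : ℝ → R := fun t => t • fderiv ℝ Φ (t • p) h p + Φ (t • p) h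
  have hX : ∀ t ∈ Icc (0 : ℝ) 1, ‖X t‖ ≤ 2 * M * ‖h‖ := by
    intro t ht
    obtain ⟨_, b1, b2, _⟩ := H _ (hball hp ht)
    have n1 := (Φ (t • p)).le_of_opNorm_le b1 h
    have n2 : ‖fderiv ℝ Φ (t • p) h p‖ ≤ M * ‖h‖ := by
      refine ((fderiv ℝ Φ (t • p) h).le_of_opNorm_le
        ((fderiv ℝ Φ (t • p)).le_of_opNorm_le b2 h) p).trans ?_
      exact mul_le_of_le_one_right (by positivity) hpn
    have n3 : ‖t • fderiv ℝ Φ (t • p) h p‖ ≤ M * ‖h‖ := by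
      rw [norm_smul, Real.norm_eq_abs, abs_of_nonneg ht.1]
      exact (mul_le_of_le_one_left (norm_nonneg _) ht.2).trans n2
    have := norm_add_le (t • fderiv ℝ Φ (t • p) h p) (Φ (t • p) h)
    simp only [X]
    linarith
  have hSX : ∀ t ∈ Icc (0 : ℝ) 1,
      ‖Φ (t • p') p' - Φ (t • p) p - X t‖ ≤ 2 * M * ‖h‖ ^ 2 := by
    intro t ht
    obtain ⟨_, b1, b2, b3⟩ := H _ (hball hp ht)
    have hth : t • p' - t • p = t • h := by rw [← smul_sub]
    have b4 := b3 _ (hball hp' ht)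
    rw [hth] at b4
    have htn : ‖t • h‖ ≤ ‖h‖ := by
      rw [norm_smul, Real.norm_eq_abs, abs_of_nonneg ht.1]
      exact mul_le_of_le_one_left (norm_nonneg _) ht.2
    have b5 : ‖Φ (t • p') - Φ (t • p) - fderiv ℝ Φ (t • p) (t • h)‖ ≤ M * ‖h‖ ^ 2 :=
      b4.trans (by gcongr)
    have n1 := (Φ (t • p') - Φ (t • p) - fderiv ℝ Φ (t • p) (t • h)).le_of_opNorm_le b5 p'
    have n2 : ‖fderiv ℝ Φ (t • p) (t • h) h‖ ≤ M * ‖h‖ * ‖h‖ :=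
      (fderiv ℝ Φ (t • p) (t • h)).le_of_opNorm_le
        (((fderiv ℝ Φ (t • p)).le_of_opNorm_le b2 (t • h)).trans (by gcongr)) h
    have e : Φ (t • p') p' - Φ (t • p) p - X t =
        (Φ (t • p') - Φ (t • p) - fderiv ℝ Φ (t • p) (t • h)) p' +
          fderiv ℝ Φ (t • p) (t • h) h := by
      have e1 : Φ (t • p) p' = Φ (t • p) p + Φ (t • p) h := by rw [← map_add, ← hp'e]
      have e2 : fderiv ℝ Φ (t • p) h p' = fderiv ℝ Φ (t • p) h p + fderiv ℝ Φ (t • p) h h := by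
        rw [← map_add, ← hp'e]
      simp only [sub_apply, map_smul, smul_apply,
        e1, e2, X, smul_add]
      abel
    rw [e]
    have := norm_add_le ((Φ (t • p') - Φ (t • p) - fderiv ℝ Φ (t • p) (t • h)) p')
      (fderiv ℝ Φ (t • p) (t • h) h)
    have : M * ‖h‖ ^ 2 * ‖p'‖ ≤ M * ‖h‖ ^ 2 := mul_le_of_le_one_right (by positivity) hpn'
    nlinarith
  -- Lipschitz bound for the solution
  have hΔ : ∀ t ∈ Icc (0 : ℝ) 1, ‖G t - g t‖ ≤ 36 * M * ‖h‖ := by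
    intro t ht
    have := norm_le_of_deriv_le (g := fun t => G t - g t) (δ := 0) (ε := 18 * M * ‖h‖)
      (by positivity) (fun t ht => (hG t ht).sub (hg t ht)) (by simp [g0, G0])
      (fun t ht => by
        have e : G t * Φ (t • p') p' - g t * Φ (t • p) p = (G t - g t) * Φ (t • p) p +
            G t * (Φ (t • p') p' - Φ (t • p) p - X t + X t) := by noncomm_ring
        rw [e]
        have n1 := norm_add_le ((G t - g t) * Φ (t • p) p)
          (G t * (Φ (t • p') p' - Φ (t • p) p - X t + X t))
        have n2 := norm_mul_le (G t - g t) (Φ (t • p) p)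
        have n3 := norm_mul_le (G t) (Φ (t • p') p' - Φ (t • p) p - X t + X t)
        have n4 := norm_add_le (Φ (t • p') p' - Φ (t • p) p - X t) (X t)
        have n5 := hSX t ht
        have n6 := hX t ht
        have n7 : ‖Φ (t • p') p' - Φ (t • p) p - X t + X t‖ ≤ 6 * M * ‖h‖ := by
          have : M * ‖h‖ * ‖h‖ ≤ M * ‖h‖ * 2 := by gcongr
          nlinarith
        have n8 : ‖G t‖ * ‖Φ (t • p') p' - Φ (t • p) p - X t + X t‖ ≤ 3 * (6 * M * ‖h‖) := by
          gcongr
          exact hbd hp' G0 hG t ht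
        have n9 : ‖G t - g t‖ * ‖Φ (t • p) p‖ ≤ ‖G t - g t‖ * 1 := by
          gcongr
          exact (hc hp ht).trans (by norm_num)
        linarith) t ht
    linarith
  -- Grönwall applied to the error of the first-order expansion
  have hD : ∀ t ∈ Icc (0 : ℝ) 1, HasDerivWithinAt
      (fun t => G t - g t - t • (g t * Φ (t • p) h))
      ((G t - g t - t • (g t * Φ (t • p) h)) * Φ (t • p) p +
        (G t * (Φ (t • p') p' - Φ (t • p) p - X t) + (G t - g t) * X t)) (Icc 0 1) t := by
    intro t ht
    have d1 : HasDerivWithinAt (fun t : ℝ => Φ (t • p) h) (fderiv ℝ Φ (t • p) p h)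
        (Icc 0 1) t := by
      have a1 : HasDerivAt (fun t : ℝ => t • p) p t := by
        simpa using (hasDerivAt_id t).smul_const p
      have a2 := (H _ (hball hp ht)).1.hasFDerivAt.comp_hasDerivAt t a1
      exact ((ContinuousLinearMap.apply ℝ R h).hasFDerivAt.comp_hasDerivAt t a2).hasDerivWithinAt
    have d2 := (hasDerivWithinAt_id t (Icc (0 : ℝ) 1)).smul ((hg t ht).mul d1)
    refine (((hG t ht).sub (hg t ht)).sub d2).congr_deriv ?_
    have hfl := hflat _ (hball hp ht) p h
    have hfl' : fderiv ℝ Φ (t • p) p h =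
        fderiv ℝ Φ (t • p) h p + Φ (t • p) h * Φ (t • p) p - Φ (t • p) p * Φ (t • p) h :=
      eq_sub_of_add_eq hfl
    simp only [hfl', X, id, one_smul, smul_add, mul_add, mul_sub, sub_mul, smul_sub,
      mul_smul_comm, smul_mul_assoc, mul_assoc]
    abel
  have := norm_le_of_deriv_le (δ := 0) (ε := (6 * M + 72 * M ^ 2) * ‖h‖ ^ 2) (by positivity) hD
    (by simp [g0, G0]) (fun t ht => by
      set D := G t - g t - t • (g t * Φ (t • p) h)
      have n1 := norm_add_le (D * Φ (t • p) p)
        (G t * (Φ (t • p') p' - Φ (t • p) p - X t) + (G t - g t) * X t)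
      have n2 := norm_add_le (G t * (Φ (t • p') p' - Φ (t • p) p - X t)) ((G t - g t) * X t)
      have n3 : ‖D * Φ (t • p) p‖ ≤ ‖D‖ * 1 := by
        refine (norm_mul_le _ _).trans ?_
        gcongr
        exact (hc hp ht).trans (by norm_num)
      have n4 : ‖G t * (Φ (t • p') p' - Φ (t • p) p - X t)‖ ≤ 3 * (2 * M * ‖h‖ ^ 2) := by
        refine (norm_mul_le _ _).trans ?_
        gcongr
        · exact hbd hp' G0 hG t ht
        · exact hSX t ht
      have n5 : ‖(G t - g t) * X t‖ ≤ 36 * M * ‖h‖ * (2 * M * ‖h‖) := by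
        refine (norm_mul_le _ _).trans ?_
        gcongr
        · exact hΔ t ht
        · exact hX t ht
      nlinarith) 1 (by simp)
  simp only [one_smul] at this
  linarith

/-- Local integration of a flat connection form at the origin. `F p` is the endpoint of the radial
solution along the segment from `0` to `p`. -/
theorem exists_frame_zero [CompleteSpace R] {Φ : E → E →L[ℝ] R} (hΦ : ContDiffAt ℝ 2 Φ 0)
    (hflat : ∀ᶠ q in 𝓝 (0 : E), ∀ u v,
      fderiv ℝ Φ q u v + Φ q u * Φ q v = fderiv ℝ Φ q v u + Φ q v * Φ q u) :
    ∃ F : E → R, F 0 = 1 ∧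
      ∀ᶠ p in 𝓝 (0 : E), HasFDerivAt F ((ContinuousLinearMap.mul ℝ R (F p)).comp (Φ p)) p := by
  obtain ⟨M, hM, hev⟩ := exists_taylor_bound hΦ
  obtain ⟨ε, hε, hfl⟩ := Metric.eventually_nhds_iff_ball.1 hflat
  have hr0 : (0 : ℝ) < min (min ε 1) (1 / (4 * M)) := by positivity
  obtain ⟨r, H, hr, hrlt⟩ := (hev.and (Ioo_mem_nhdsGT hr0)).exists
  have hrε : r ≤ ε := hrlt.le.trans ((min_le_left _ _).trans (min_le_left _ _))
  have hr1 : r ≤ 1 := hrlt.le.trans ((min_le_left _ _).trans (min_le_right _ _))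
  have hrM : M * r ≤ 1 / 4 := by
    have : r ≤ 1 / (4 * M) := hrlt.le.trans (min_le_right _ _)
    rw [le_div_iff₀ (by positivity)] at this
    linarith
  have hex : ∀ p : E, ∃ g : ℝ → R, p ∈ ball (0 : E) r → g 0 = 1 ∧
      ∀ t ∈ Icc (0 : ℝ) 1, HasDerivWithinAt g (g t * Φ (t • p) p) (Icc 0 1) t := by
    intro p
    by_cases hp : p ∈ ball (0 : E) r
    swap
    · exact ⟨0, fun h => absurd h hp⟩
    have hball : ∀ t ∈ Icc (0 : ℝ) 1, t • p ∈ ball (0 : E) r := by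
      intro t ht
      rw [mem_ball_zero_iff] at hp ⊢
      rw [norm_smul, Real.norm_eq_abs, abs_of_nonneg ht.1]
      exact (mul_le_of_le_one_left (norm_nonneg _) ht.2).trans_lt hp
    obtain ⟨g, hg⟩ := exists_linear_ode (c := fun t => Φ (t • p) p)
      (fun t ht => by
        have a1 : ContinuousAt (fun t : ℝ => t • p) t := by fun_prop
        have a2 : ContinuousAt (fun t : ℝ => Φ (t • p)) t :=
          ContinuousAt.comp (g := Φ) (H _ (hball t ht)).1.continuousAt a1
        exact (a2.clm_apply continuousAt_const).continuousWithinAt)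
      (fun t ht => by
        have h1 := (Φ (t • p)).le_of_opNorm_le (H _ (hball t ht)).2.1 p
        rw [mem_ball_zero_iff] at hp
        nlinarith)
    exact ⟨g, fun _ => hg⟩
  choose g hg using hex
  refine ⟨fun p => g p 1, ?_, ?_⟩
  · obtain ⟨h0, h1⟩ := hg 0 (mem_ball_self hr)
    have := norm_le_of_deriv_le (g := fun t => g 0 t - 1) (δ := 0) (ε := 0) le_rfl
      (fun t ht => (h1 t ht).sub_const 1) (by simp [h0]) (by simp) 1 (by simp)
    simpa [sub_eq_zero] using this
  · filter_upwards [ball_mem_nhds (0 : E) hr] with p hp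
    rw [hasFDerivAt_iff_isLittleO]
    have hO : (fun p' => g p' 1 - g p 1 -
        ((ContinuousLinearMap.mul ℝ R (g p 1)).comp (Φ p)) (p' - p)) =O[𝓝 p]
        fun p' => ‖p' - p‖ ^ 2 := by
      refine Asymptotics.IsBigO.of_bound (12 * M + 144 * M ^ 2) ?_
      filter_upwards [isOpen_ball.mem_nhds hp] with p' hp'
      obtain ⟨g0, h1⟩ := hg p hp
      obtain ⟨G0, h2⟩ := hg p' hp'
      simpa using frame_estimate hM hr1 hrM H
        (fun q hq => hfl q (ball_subset_ball hrε hq)) hp hp' g0 G0 h1 h2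
    refine hO.trans_isLittleO ?_
    have := Asymptotics.isLittleO_norm_pow_id (E' := E) (n := 2) (by norm_num)
    have ht : Tendsto (fun p' => p' - p) (𝓝 p) (𝓝 0) := by
      simpa using (continuous_id.sub continuous_const).tendsto (x := p) (f := fun p' : E => p' - p)
    exact this.comp_tendsto ht

lemma two_le_infty : (2 : WithTop ℕ∞) ≤ ∞ := by
  exact WithTop.coe_le_coe.2 (le_top : (2 : ℕ∞) ≤ ⊤)

/-- A smooth flat connection form on an open set admits, near each point, a smooth invertible frame
`F` with `dF = F Φ`. -/
theorem exists_frame [CompleteSpace R] {Φ : E → E →L[ℝ] R} {U : Set E} (hU : IsOpen U)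
    (hΦ : ContDiffOn ℝ ∞ Φ U)
    (hflat : ∀ q ∈ U, ∀ u v,
      fderiv ℝ Φ q u v + Φ q u * Φ q v = fderiv ℝ Φ q v u + Φ q v * Φ q u)
    {p₀ : E} (hp₀ : p₀ ∈ U) :
    ∃ V : Set E, IsOpen V ∧ p₀ ∈ V ∧ V ⊆ U ∧ ∃ F : E → R, F p₀ = 1 ∧ ContDiffOn ℝ ∞ F V ∧
      (∀ p ∈ V, IsUnit (F p)) ∧
      ∀ p ∈ V, HasFDerivAt F ((ContinuousLinearMap.mul ℝ R (F p)).comp (Φ p)) p := by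
  have hadd : Tendsto (fun q : E => q + p₀) (𝓝 0) (𝓝 p₀) := by
    simpa using (continuous_id.add continuous_const).tendsto (x := 0) (f := fun q : E => q + p₀)
  have hsub : Tendsto (fun q : E => q - p₀) (𝓝 p₀) (𝓝 0) := by
    simpa using (continuous_id.sub continuous_const).tendsto (x := p₀) (f := fun q : E => q - p₀)
  have hΦ0 : ContDiffAt ℝ 2 (fun q => Φ (q + p₀)) 0 := by
    have h1 : ContDiffAt ℝ 2 Φ (0 + p₀) := by
      rw [zero_add]
      exact (hΦ.contDiffAt (hU.mem_nhds hp₀)).of_le two_le_infty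
    exact h1.comp (f := fun q : E => q + p₀) 0 (contDiffAt_id.add contDiffAt_const)
  obtain ⟨F, F0, hF⟩ := exists_frame_zero hΦ0 (by
    filter_upwards [hadd.eventually (hU.mem_nhds hp₀)] with q hq u v
    rw [fderiv_comp_add_right]
    exact hflat _ hq u v)
  have hF' : ∀ᶠ p in 𝓝 p₀, HasFDerivAt (fun q => F (q - p₀))
      ((ContinuousLinearMap.mul ℝ R (F (p - p₀))).comp (Φ p)) p := by
    filter_upwards [hsub.eventually hF] with p hp
    rw [sub_add_cancel] at hp
    simpa [Function.comp_def] using! hp.comp p ((hasFDerivAt_id p).sub_const p₀)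
  have hunit : ∀ᶠ p in 𝓝 p₀, IsUnit (F (p - p₀)) := by
    have hc : ContinuousAt (fun q => F (q - p₀)) p₀ := hF'.self_of_nhds.continuousAt
    refine hc.eventually (p := fun x => IsUnit x) ?_
    simp only [sub_self, F0]
    exact Units.isOpen.mem_nhds isUnit_one
  obtain ⟨V, hV, hVo, hVp⟩ := _root_.eventually_nhds_iff.1 ((hF'.and hunit).and (hU.mem_nhds hp₀))
  refine ⟨V, hVo, hVp, fun p hp => (hV p hp).2, fun q => F (q - p₀), by simpa using F0, ?_,
    fun p hp => (hV p hp).1.2, fun p hp => (hV p hp).1.1⟩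
  have hdiff : DifferentiableOn ℝ (fun q => F (q - p₀)) V := fun p hp =>
    (hV p hp).1.1.differentiableAt.differentiableWithinAt
  -- the equation itself upgrades the regularity of `F` one order at a time
  refine contDiffOn_infty.2 fun n => ?_
  induction n with
  | zero => exact contDiffOn_zero.2 hdiff.continuousOn
  | succ n ih =>
    push_cast
    rw [contDiffOn_succ_iff_fderiv_of_isOpen hVo]
    refine ⟨hdiff, by simp, ?_⟩
    have hΦn : ContDiffOn ℝ n Φ V :=
      (hΦ.mono fun p hp => (hV p hp).2).of_le (mod_cast le_top)
    have : ContDiffOn ℝ n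
        (fun p => (ContinuousLinearMap.mul ℝ R (F (p - p₀))).comp (Φ p)) V :=
      ((ContinuousLinearMap.mul ℝ R).contDiff.comp_contDiffOn ih).clm_comp hΦn
    exact this.congr fun p hp => (hV p hp).1.1.fderiv


/-- An exact form `dP` whose values commute pointwise is flat, hence has local frames. -/
theorem exists_frame_of_potential [CompleteSpace R] {P : E → R} {U : Set E} (hU : IsOpen U)
    (hP : ContDiffOn ℝ ∞ P U)
    (hcomm : ∀ q ∈ U, ∀ u v, fderiv ℝ P q u * fderiv ℝ P q v = fderiv ℝ P q v * fderiv ℝ P q u)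
    {p₀ : E} (hp₀ : p₀ ∈ U) :
    ∃ V : Set E, IsOpen V ∧ p₀ ∈ V ∧ V ⊆ U ∧ ∃ F : E → R, F p₀ = 1 ∧ ContDiffOn ℝ ∞ F V ∧
      (∀ p ∈ V, IsUnit (F p)) ∧
      ∀ p ∈ V, HasFDerivAt F ((ContinuousLinearMap.mul ℝ R (F p)).comp (fderiv ℝ P p)) p := by
  refine exists_frame hU ((contDiffOn_infty_iff_fderiv_of_isOpen hU).1 hP).2
    (fun q hq u v => ?_) hp₀
  rw [(hP.contDiffAt (hU.mem_nhds hq)).isSymmSndFDerivAt (by simpa using two_le_infty) u v,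
    hcomm q hq u v]

/-! ### Christoffel pairs -/

lemma re_fderiv_eq_zero_s8 {U : Set (ℝ × ℝ)} (hU : IsOpen U) {f : ℝ × ℝ → HQ}
    (hf : ContDiffOn ℝ ∞ f U) (hfIm : ∀ p ∈ U, (f p).re = 0) {q : ℝ × ℝ} (hq : q ∈ U)
    (u : ℝ × ℝ) : (fderiv ℝ f q u).re = 0 := by
  let ρ : HQ →L[ℝ] ℝ := LinearMap.toContinuousLinearMap
    { toFun := fun x => x.re, map_add' := fun _ _ => rfl, map_smul' := fun _ _ => rfl }
  have h1 := ρ.hasFDerivAt.comp q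
    ((hf.contDiffAt (hU.mem_nhds hq)).differentiableAt (by simp)).hasFDerivAt
  have h2 : HasFDerivAt (ρ ∘ f) (0 : ℝ × ℝ →L[ℝ] ℝ) q := by
    refine (hasFDerivAt_const (0 : ℝ) q).congr_of_eventuallyEq ?_
    filter_upwards [hU.mem_nhds hq] with p hp using hfIm p hp
  have := congrArg (fun T : ℝ × ℝ →L[ℝ] ℝ => T u) (h1.unique h2)
  exact this

/-- The Christoffel relation in arbitrary directions, together with its conjugate, in which the
factors appear in the opposite order. -/
lemma christoffel_apply {U : Set (ℝ × ℝ)} (hU : IsOpen U) {f fs : ℝ × ℝ → HQ}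
    (hf : ContDiffOn ℝ ∞ f U) (hfs : ContDiffOn ℝ ∞ fs U)
    (hfIm : ∀ p ∈ U, (f p).re = 0) (hfsIm : ∀ p ∈ U, (fs p).re = 0)
    (hC : ∀ p ∈ U, pdx f p * pdy fs p = pdy f p * pdx fs p) {q : ℝ × ℝ} (hq : q ∈ U)
    (u v : ℝ × ℝ) :
    fderiv ℝ f q u * fderiv ℝ fs q v = fderiv ℝ f q v * fderiv ℝ fs q u ∧
      fderiv ℝ fs q u * fderiv ℝ f q v = fderiv ℝ fs q v * fderiv ℝ f q u := by
  have key : ∀ u v : ℝ × ℝ,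
      fderiv ℝ f q u * fderiv ℝ fs q v = fderiv ℝ f q v * fderiv ℝ fs q u := by
    intro u v
    have hdec : ∀ w : ℝ × ℝ, w = w.1 • ((1, 0) : ℝ × ℝ) + w.2 • ((0, 1) : ℝ × ℝ) := fun w => by
      ext <;> simp
    have h := hC q hq
    simp only [pdx, pdy] at h
    rw [hdec u, hdec v]
    simp only [map_add, map_smul, mul_add, add_mul, smul_mul_smul_comm, h]
    simp only [mul_comm v.1, mul_comm v.2]
    abel
  refine ⟨key u v, ?_⟩
  -- quaternion conjugation negates imaginary quaternions and reverses products
  have hst : ∀ {a : HQ}, a.re = 0 → star a = -a := fun {a} ha => by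
    ext <;> simp [ha]
  have := congrArg star (key v u)
  simpa only [star_mul, hst (re_fderiv_eq_zero_s8 hU hf hfIm hq _),
    hst (re_fderiv_eq_zero_s8 hU hfs hfsIm hq _), neg_mul_neg] using this

/-- The frame existence theorem with `M₂(ℍ)` replaced in the analysis by an isomorphic Banach
algebra `R`. Matrices carry no canonical norm, and a chosen norm on them competes with the entrywise
topology in instance search; working in `R` avoids this. -/
theorem spectral_frame_exists_of_algEquiv {R : Type*} [NormedRing R] [NormedAlgebra ℝ R]
    [NormOneClass R] [CompleteSpace R] (e : R ≃ₐ[ℝ] Matrix (Fin 2) (Fin 2) HQ)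
    (U : Set (ℝ × ℝ)) (hU : IsOpen U) (f fs : ℝ × ℝ → HQ)
    (hf : ContDiffOn ℝ ∞ f U) (hfs : ContDiffOn ℝ ∞ fs U)
    (hfIm : ∀ p ∈ U, (f p).re = 0) (hfsIm : ∀ p ∈ U, (fs p).re = 0)
    (hC : ∀ p ∈ U, pdx f p * pdy fs p = pdy f p * pdx fs p)
    (l : ℝ) (p₀ : ℝ × ℝ) (hp₀ : p₀ ∈ U) :
    ∃ V : Set (ℝ × ℝ), IsOpen V ∧ p₀ ∈ V ∧ V ⊆ U ∧
      ∃ F : ℝ × ℝ → Matrix (Fin 2) (Fin 2) HQ,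
        F p₀ = 1 ∧
        (∀ i j : Fin 2, ContDiffOn ℝ ∞ (fun q => F q i j) V) ∧
        (∀ p ∈ V, IsUnit (F p)) ∧
        (∀ p ∈ V, ∀ i j : Fin 2,
          pdx (fun q => F q i j) p =
            (F p * !![0, (l : HQ) * pdx fs p; pdx f p, 0]) i j ∧
          pdy (fun q => F q i j) p =
            (F p * !![0, (l : HQ) * pdy fs p; pdy f p, 0]) i j) := by
  have hfin : FiniteDimensional ℝ R := e.symm.toLinearEquiv.finiteDimensional
  let N : HQ × HQ →ₗ[ℝ] Matrix (Fin 2) (Fin 2) HQ :=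
    { toFun := fun h => !![0, (l : HQ) * h.1; h.2, 0]
      map_add' := fun a b => by ext1 i j; fin_cases i <;> fin_cases j <;> simp [mul_add]
      map_smul' := fun a b => by ext1 i j; fin_cases i <;> fin_cases j <;> simp }
  let L : HQ × HQ →L[ℝ] R :=
    LinearMap.toContinuousLinearMap (e.symm.toLinearEquiv.toLinearMap.comp N)
  have hL : ∀ h, L h = e.symm !![0, (l : HQ) * h.1; h.2, 0] := fun _ => rfl
  let π : Fin 2 → Fin 2 → R →L[ℝ] HQ := fun i j => LinearMap.toContinuousLinearMap
    ((Matrix.entryLinearMap ℝ HQ i j).comp e.toLinearEquiv.toLinearMap)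
  have hP : ContDiffOn ℝ ∞ (fun q => L (fs q, f q)) U := L.contDiff.comp_contDiffOn (hfs.prodMk hf)
  have hdP : ∀ q ∈ U, ∀ u, fderiv ℝ (fun q => L (fs q, f q)) q u =
      e.symm !![0, (l : HQ) * fderiv ℝ fs q u; fderiv ℝ f q u, 0] := by
    intro q hq u
    have d1 := ((hf.contDiffAt (hU.mem_nhds hq)).differentiableAt (by simp)).hasFDerivAt
    have d2 := ((hfs.contDiffAt (hU.mem_nhds hq)).differentiableAt (by simp)).hasFDerivAt
    have d3 : HasFDerivAt (fun q => L (fs q, f q)) _ q := L.hasFDerivAt.comp q (d2.prodMk d1)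
    rw [d3.fderiv]
    exact hL _
  obtain ⟨V, hVo, hVp, hVU, F, F0, hFs, hFu, hF⟩ := exists_frame_of_potential hU hP (by
    intro q hq u v
    obtain ⟨h1, h2⟩ := christoffel_apply hU hf hfs hfIm hfsIm hC hq u v
    rw [hdP q hq, hdP q hq, ← map_mul e.symm, ← map_mul e.symm]
    congr 1
    have hl : ∀ a : HQ, a * (l : HQ) = (l : HQ) * a := fun a => (Quaternion.coe_commutes l a).symm
    ext1 i j
    fin_cases i <;> fin_cases j <;> simp [mul_assoc, h2]
    simp only [← mul_assoc, hl]
    simp only [mul_assoc, h1]) hp₀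
  have hd : ∀ p ∈ V, ∀ i j u, fderiv ℝ (fun q => e (F q) i j) p u =
      (e (F p) * !![0, (l : HQ) * fderiv ℝ fs p u; fderiv ℝ f p u, 0]) i j := by
    intro p hp i j u
    have d : HasFDerivAt (fun q => e (F q) i j) _ p := (π i j).hasFDerivAt.comp p (hF p hp)
    rw [d.fderiv]
    change e (F p * fderiv ℝ (fun q => L (fs q, f q)) p u) i j = _
    rw [hdP p (hVU hp), map_mul, AlgEquiv.apply_symm_apply]
  exact ⟨V, hVo, hVp, hVU, fun q => e (F q), by simp [F0],
    fun i j => (π i j).contDiff.comp_contDiffOn hFs, fun p hp => (hFu p hp).map e,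
    fun p hp i j => ⟨hd p hp i j _, hd p hp i j _⟩⟩

theorem spectral_frame_exists
    (U : Set (ℝ × ℝ)) (hU : IsOpen U) (f fs : ℝ × ℝ → HQ)
    (hf : ContDiffOn ℝ ∞ f U) (hfs : ContDiffOn ℝ ∞ fs U)
    (hfIm : ∀ p ∈ U, (f p).re = 0) (hfsIm : ∀ p ∈ U, (fs p).re = 0)
    (hC : ∀ p ∈ U, pdx f p * pdy fs p = pdy f p * pdx fs p)
    (l : ℝ) (p₀ : ℝ × ℝ) (hp₀ : p₀ ∈ U) :
    ∃ V : Set (ℝ × ℝ), IsOpen V ∧ p₀ ∈ V ∧ V ⊆ U ∧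
      ∃ F : ℝ × ℝ → Matrix (Fin 2) (Fin 2) HQ,
        F p₀ = 1 ∧
        (∀ i j : Fin 2, ContDiffOn ℝ ∞ (fun q => F q i j) V) ∧
        (∀ p ∈ V, IsUnit (F p)) ∧
        (∀ p ∈ V, ∀ i j : Fin 2,
          pdx (fun q => F q i j) p =
            (F p * !![0, (l : HQ) * pdx fs p; pdx f p, 0]) i j ∧
          pdy (fun q => F q i j) p =
            (F p * !![0, (l : HQ) * pdy fs p; pdy f p, 0]) i j) := by
  let i₁ : NormedRing (Matrix (Fin 2) (Fin 2) HQ) := Matrix.linftyOpNormedRing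
  let i₂ : NormedAlgebra ℝ (Matrix (Fin 2) (Fin 2) HQ) := Matrix.linftyOpNormedAlgebra
  have i₃ : NormOneClass (Matrix (Fin 2) (Fin 2) HQ) := Matrix.linfty_opNormOneClass
  have i₄ : CompleteSpace (Matrix (Fin 2) (Fin 2) HQ) := FiniteDimensional.complete ℝ _
  exact spectral_frame_exists_of_algEquiv (R := Matrix (Fin 2) (Fin 2) HQ) AlgEquiv.refl
    U hU f fs hf hfs hfIm hfsIm hC l p₀ hp₀

end
end

section
/- (The T_λ-transform rescales the polarization by −λ.) With the hypotheses and notation of the spectral frame: f, f★ : U → Im ℍ smooth with f_x·f★_y = f_y·f★_x, λ ∈ ℝ, F : U → M₂(ℍ) smooth with F₂₁, F₂₂ pointwise invertible, ∂_x F = F·[[0, λ·f★_x],[f_x, 0]], ∂_y F = F·[[0, λ·f★_y],[f_y, 0]], g := F₁₁·F₂₁⁻¹, ĝ := F₁₂·F₂₂⁻¹, and assuming g(p) ≠ ĝ(p) for all p: for every choice of a, b ∈ {x, y} one has, at every point of U, ∂_a g · (g − ĝ)⁻¹ · ∂_b ĝ · (g − ĝ)⁻¹ = −λ · [(ĝ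 − g)·F₂₂] · (∂_a f · ∂_b f★) · [(ĝ − g)·F₂₂]⁻¹. (Hence the quadratic differential dg·dCg of the T_λ-transform is conjugate to −λ·df·df★, so curvature lines correspond.) -/
/-!
The quotient rule `d(a b⁻¹) = (da - (a b⁻¹) db) b⁻¹` and the frame equations give
`∂ₐg = (ĝ - g) F₂₂ ∂ₐf F₂₁⁻¹` and `∂ᵦĝ = λ (g - ĝ) F₂₁ ∂ᵦf★ F₂₂⁻¹`. In the product
`∂ₐg (g - ĝ)⁻¹ ∂ᵦĝ (g - ĝ)⁻¹` the inner factors `F₂₁⁻¹ (g - ĝ)⁻¹ (g - ĝ) F₂₁` cancel, and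
`(g - ĝ)⁻¹ = -(ĝ - g)⁻¹` produces the sign. The argument works for any two directions, so
`polarization_dir` treats arbitrary direction vectors `v`, `w`.
-/

/- STATEMENT 10 (The T_λ-transform rescales the polarization by −λ): With the
spectral frame F of the Christoffel pair (f, f★) and g = F₁₁·F₂₁⁻¹, ĝ = F₁₂·F₂₂⁻¹
(with g ≠ ĝ everywhere), for each choice of ∂_a, ∂_b ∈ {∂_x, ∂_y}:
∂_a g·(g − ĝ)⁻¹·∂_b ĝ·(g − ĝ)⁻¹ = −λ·[(ĝ − g)·F₂₂]·(∂_a f·∂_b f★)·[(ĝ − g)·F₂₂]⁻¹. -/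

noncomputable section
open scoped ContDiff Quaternion

/-- Affine projection `p ↦ a p * (b p)⁻¹`. -/
noncomputable def affQ (a b : ℝ × ℝ → HQ) : ℝ × ℝ → HQ := fun p => a p * (b p)⁻¹

/-- Noncommutative quotient rule for the directional derivative of `a * b⁻¹`. -/
theorem fderiv_affQ {a b : ℝ × ℝ → HQ} {p : ℝ × ℝ} (ha : DifferentiableAt ℝ a p)
    (hb : DifferentiableAt ℝ b p) (h0 : b p ≠ 0) (v : ℝ × ℝ) :
    fderiv ℝ (affQ a b) p v =
      (fderiv ℝ a p v - affQ a b p * fderiv ℝ b p v) * (b p)⁻¹ := by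
  have hg : DifferentiableAt ℝ (affQ a b) p := ha.mul (hb.inv h0)
  -- Differentiating `(a b⁻¹) b = a`, valid near `p`, avoids the derivative of the inversion.
  have hev : (fun q => affQ a b q * b q) =ᶠ[nhds p] a := by
    filter_upwards [hb.continuousAt.eventually_ne h0] with q hq
    simp [affQ, mul_assoc, inv_mul_cancel₀ hq]
  have h1 : fderiv ℝ (fun q => affQ a b q * b q) p v = fderiv ℝ a p v := by
    rw [hev.fderiv_eq]
  have h2 := (hg.hasFDerivAt.mul' hb.hasFDerivAt).fderiv
  have h3 : affQ a b p * fderiv ℝ b p v + fderiv ℝ (affQ a b) p v * b p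
      = fderiv ℝ a p v := by
    rw [← h1]
    exact (congrArg (fun L : ℝ × ℝ →L[ℝ] HQ => L v) h2).symm
  rw [eq_mul_inv_iff_mul_eq₀ h0, ← h3]
  abel

/-- The polarization identity at a point, with the partial derivatives replaced by the
directional derivatives along `v` and `w`. -/
theorem polarization_dir {a11 a12 a21 a22 f fs : ℝ × ℝ → HQ} {l : ℝ} {p v w : ℝ × ℝ}
    (d11 : DifferentiableAt ℝ a11 p) (d12 : DifferentiableAt ℝ a12 p)
    (d21 : DifferentiableAt ℝ a21 p) (d22 : DifferentiableAt ℝ a22 p)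
    (h21 : a21 p ≠ 0) (h22 : a22 p ≠ 0)
    (e11 : fderiv ℝ a11 p v = a12 p * fderiv ℝ f p v)
    (e21 : fderiv ℝ a21 p v = a22 p * fderiv ℝ f p v)
    (e12 : fderiv ℝ a12 p w = a11 p * ((l : HQ) * fderiv ℝ fs p w))
    (e22 : fderiv ℝ a22 p w = a21 p * ((l : HQ) * fderiv ℝ fs p w))
    (hne : affQ a11 a21 p ≠ affQ a12 a22 p) :
    fderiv ℝ (affQ a11 a21) p v * (affQ a11 a21 p - affQ a12 a22 p)⁻¹ *
        fderiv ℝ (affQ a12 a22) p w * (affQ a11 a21 p - affQ a12 a22 p)⁻¹ =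
      -((l : HQ) *
        (((affQ a12 a22 p - affQ a11 a21 p) * a22 p) * (fderiv ℝ f p v * fderiv ℝ fs p w) *
          ((affQ a12 a22 p - affQ a11 a21 p) * a22 p)⁻¹)) := by
  rw [fderiv_affQ d11 d21 h21, fderiv_affQ d12 d22 h22, e11, e21, e12, e22]
  have k1 : a11 p = affQ a11 a21 p * a21 p := by simp [affQ, mul_assoc, inv_mul_cancel₀ h21]
  have k2 : a12 p = affQ a12 a22 p * a22 p := by simp [affQ, mul_assoc, inv_mul_cancel₀ h22]
  rw [k1, k2]
  generalize affQ a11 a21 p = g at *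
  generalize affQ a12 a22 p = g' at *
  generalize a21 p = s at *
  generalize a22 p = t at *
  generalize fderiv ℝ f p v = A
  generalize fderiv ℝ fs p w = B
  have hd : g - g' ≠ 0 := sub_ne_zero.mpr hne
  have r1 : g' * t * A - g * (t * A) = -((g - g') * t * A) := by noncomm_ring
  have r2 : g * s * ((l : HQ) * B) - g' * (s * ((l : HQ) * B))
      = (g - g') * (s * ((l : HQ) * B)) := by noncomm_ring
  rw [r1, r2, ← neg_sub g g']
  generalize g - g' = d at *
  rw [Quaternion.coe_mul_eq_smul, Quaternion.coe_mul_eq_smul]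
  simp only [mul_smul_comm, smul_mul_assoc, neg_mul, mul_neg, inv_neg, mul_inv_rev, neg_neg,
    mul_assoc, inv_mul_cancel_left₀ hd, inv_mul_cancel_left₀ h21, smul_neg]

theorem T_transform_rescales_polarization
    (U : Set (ℝ × ℝ)) (hU : IsOpen U) (f fs : ℝ × ℝ → HQ) (l : ℝ)
    (hf : ContDiffOn ℝ ∞ f U) (hfs : ContDiffOn ℝ ∞ fs U)
    (hfIm : ∀ p ∈ U, (f p).re = 0) (hfsIm : ∀ p ∈ U, (fs p).re = 0)
    (hC : ∀ p ∈ U, pdx f p * pdy fs p = pdy f p * pdx fs p)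
    (F₁₁ F₁₂ F₂₁ F₂₂ : ℝ × ℝ → HQ)
    (hF₁₁ : ContDiffOn ℝ ∞ F₁₁ U) (hF₁₂ : ContDiffOn ℝ ∞ F₁₂ U)
    (hF₂₁ : ContDiffOn ℝ ∞ F₂₁ U) (hF₂₂ : ContDiffOn ℝ ∞ F₂₂ U)
    (hinv₂₁ : ∀ p ∈ U, F₂₁ p ≠ 0) (hinv₂₂ : ∀ p ∈ U, F₂₂ p ≠ 0)
    (h11x : ∀ p ∈ U, pdx F₁₁ p = F₁₂ p * pdx f p)
    (h12x : ∀ p ∈ U, pdx F₁₂ p = F₁₁ p * ((l : HQ) * pdx fs p))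
    (h21x : ∀ p ∈ U, pdx F₂₁ p = F₂₂ p * pdx f p)
    (h22x : ∀ p ∈ U, pdx F₂₂ p = F₂₁ p * ((l : HQ) * pdx fs p))
    (h11y : ∀ p ∈ U, pdy F₁₁ p = F₁₂ p * pdy f p)
    (h12y : ∀ p ∈ U, pdy F₁₂ p = F₁₁ p * ((l : HQ) * pdy fs p))
    (h21y : ∀ p ∈ U, pdy F₂₁ p = F₂₂ p * pdy f p)
    (h22y : ∀ p ∈ U, pdy F₂₂ p = F₂₁ p * ((l : HQ) * pdy fs p))
    (hgne : ∀ p ∈ U, affQ F₁₁ F₂₁ p ≠ affQ F₁₂ F₂₂ p) :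
    ∀ Da Db : (ℝ × ℝ → HQ) → ℝ × ℝ → HQ,
      (Da = (fun h (p : ℝ × ℝ) => pdx h p) ∨ Da = (fun h (p : ℝ × ℝ) => pdy h p)) →
      (Db = (fun h (p : ℝ × ℝ) => pdx h p) ∨ Db = (fun h (p : ℝ × ℝ) => pdy h p)) →
      ∀ p ∈ U,
        Da (affQ F₁₁ F₂₁) p * (affQ F₁₁ F₂₁ p - affQ F₁₂ F₂₂ p)⁻¹ *
            Db (affQ F₁₂ F₂₂) p * (affQ F₁₁ F₂₁ p - affQ F₁₂ F₂₂ p)⁻¹ =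
        -((l : HQ) *
          (((affQ F₁₂ F₂₂ p - affQ F₁₁ F₂₁ p) * F₂₂ p) * (Da f p * Db fs p) *
            ((affQ F₁₂ F₂₂ p - affQ F₁₁ F₂₁ p) * F₂₂ p)⁻¹)) := by
  have hd : ∀ {a : ℝ × ℝ → HQ}, ContDiffOn ℝ ∞ a U → ∀ p ∈ U, DifferentiableAt ℝ a p :=
    fun h p hp => (h.contDiffAt (hU.mem_nhds hp)).differentiableAt (by simp)
  rintro Da Db (rfl | rfl) (rfl | rfl) p hp
  · exact polarization_dir (hd hF₁₁ p hp) (hd hF₁₂ p hp) (hd hF₂₁ p hp) (hd hF₂₂ p hp)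
      (hinv₂₁ p hp) (hinv₂₂ p hp) (h11x p hp) (h21x p hp) (h12x p hp) (h22x p hp) (hgne p hp)
  · exact polarization_dir (hd hF₁₁ p hp) (hd hF₁₂ p hp) (hd hF₂₁ p hp) (hd hF₂₂ p hp)
      (hinv₂₁ p hp) (hinv₂₂ p hp) (h11x p hp) (h21x p hp) (h12y p hp) (h22y p hp) (hgne p hp)
  · exact polarization_dir (hd hF₁₁ p hp) (hd hF₁₂ p hp) (hd hF₂₁ p hp) (hd hF₂₂ p hp)
      (hinv₂₁ p hp) (hinv₂₂ p hp) (h11y p hp) (h21y p hp) (h12x p hp) (h22x p hp) (hgne p hp)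
  · exact polarization_dir (hd hF₁₁ p hp) (hd hF₁₂ p hp) (hd hF₂₁ p hp) (hd hF₂₂ p hp)
      (hinv₂₁ p hp) (hinv₂₂ p hp) (h11y p hp) (h21y p hp) (h12y p hp) (h22y p hp) (hgne p hp)

end
end

section
/- (Minimal surfaces are the isothermic surfaces whose Christoffel transform is the Gauss map.) Let f : U → Im ℍ be a conformal immersion with unit normal n := f_x·f_y/(|f_x|·|f_y|). Then f_x·n_y = f_y·n_x at every point of U (i.e. df ∧ dn = 0, the pair (f, n) satisfies the Christoffel relation) if and only if f_xx + f_yy = 0 on U (i.e. f is harmonic in the conformal parameters, equivalently f is a minimal surface in Im ℍ ≅ ℝ³). -/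
/-!
Write `a = f_x`, `b = f_y`. For imaginary `a ⟂ b` of equal length, the unit normal
`n = ab / (|a||b|)` satisfies `a n = -b` and `b n = a`, as identities of functions on the open set
`U`. Differentiating the first along `y` and the second along `x` gives
`a_y n + a n_y = -b_y` and `b_x n + b n_x = a_x`; since `a_y = b_x`, subtraction yields
`f_x n_y - f_y n_x = -(f_xx + f_yy)` (`christoffel_defect`), so that the two conditions of the
theorem are equivalent point by point.
-/

/- STATEMENT 15 (Minimal surfaces are the isothermic surfaces whose Christoffel
transform is the Gauss map): For a conformal immersion f : U → Im ℍ with unit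
normal n = f_x·f_y/(|f_x|·|f_y|), the Christoffel relation f_x·n_y = f_y·n_x holds
at every point of U iff f_xx + f_yy = 0 on U (f harmonic, i.e. minimal). -/

noncomputable section
open scoped ContDiff Quaternion

/-- Quaternion algebra behind rotation by the normal in the tangent plane: `n = ab / (|a||b|)`
satisfies `a n = -b` and `b n = a`, because `aab = -|a|² b` and `bab = |b|² a`. -/
lemma mul_normal_of_orthogonal {a b : HQ} (ha : a.re = 0) (hb : b.re = 0)
    (hn : ‖a‖ = ‖b‖) (hpos : 0 < ‖a‖) (ho : (a * star b).re = 0) :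
    a * ((a * b) / ((‖a‖ * ‖b‖ : ℝ) : HQ)) = -b ∧
    b * ((a * b) / ((‖a‖ * ‖b‖ : ℝ) : HQ)) = a := by
  have hA : ‖a‖ * ‖b‖ = Quaternion.normSq a := by
    rw [← hn, Quaternion.normSq_eq_norm_mul_self]
  have hB : Quaternion.normSq a = Quaternion.normSq b := by
    rw [Quaternion.normSq_eq_norm_mul_self, Quaternion.normSq_eq_norm_mul_self, hn]
  have hne : ((Quaternion.normSq a : ℝ) : HQ) ≠ 0 := by
    rw [← hA, ← hn]
    exact (Quaternion.coe_injective.ne (mul_pos hpos hpos).ne').trans_eq Quaternion.coe_zero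
  rw [hA, ← mul_div_assoc, ← mul_div_assoc, div_eq_iff hne, div_eq_iff hne]
  simp only [Quaternion.re_mul, Quaternion.re_star, Quaternion.imI_star, Quaternion.imJ_star,
    Quaternion.imK_star, ha, hb] at ho
  have hNa := Quaternion.normSq_def' a
  have hNb := Quaternion.normSq_def' b
  rw [← hB] at hNb
  generalize Quaternion.normSq a = N at *
  constructor
  · ext <;> simp [ha, hb] at hNa ⊢ <;> (try rw [hNa]) <;> ring
  · ext <;> simp [ha, hb] at hNb ⊢
    · ring
    · rw [hNb]
      linear_combination (-2 * b.imI) * ho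
    · rw [hNb]
      linear_combination (-2 * b.imJ) * ho
    · rw [hNb]
      linear_combination (-2 * b.imK) * ho

/-- A derivative of an imaginary-valued map is imaginary. -/
lemma fderiv_re_eq_zero {U : Set (ℝ × ℝ)} (hU : IsOpen U) {f : ℝ × ℝ → HQ}
    (hfIm : ∀ p ∈ U, (f p).re = 0) {p : ℝ × ℝ} (hp : p ∈ U) (hd : DifferentiableAt ℝ f p)
    (v : ℝ × ℝ) : (fderiv ℝ f p v).re = 0 := by
  -- the real part, `q ↦ ⟨1, q⟩`, as a continuous linear functional
  let R : HQ →L[ℝ] ℝ := innerSL ℝ (1 : HQ)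
  have hR : ∀ q : HQ, R q = q.re := fun q => by
    simp [R, Quaternion.inner_def]
  have h1 : HasFDerivAt (fun q => R (f q)) (R.comp (fderiv ℝ f p)) p :=
    R.hasFDerivAt.comp p hd.hasFDerivAt
  have h2 : (fun q => R (f q)) =ᶠ[nhds p] fun _ => (0 : ℝ) := by
    filter_upwards [hU.mem_nhds hp] with q hq
    rw [hR, hfIm q hq]
  have h3 := h1.unique ((hasFDerivAt_const (0 : ℝ) p).congr_of_eventuallyEq h2)
  have h4 := DFunLike.congr_fun h3 v
  simpa [hR] using h4

/-- The defect of the Christoffel relation between a conformal immersion and its normal is minus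
the Laplacian of the immersion. -/
lemma christoffel_defect
    {U : Set (ℝ × ℝ)} (hU : IsOpen U) {f : ℝ × ℝ → HQ}
    (hf : ContDiffOn ℝ ∞ f U) (hfIm : ∀ p ∈ U, (f p).re = 0)
    (hconf : ∀ p ∈ U, ‖pdx f p‖ = ‖pdy f p‖ ∧ 0 < ‖pdx f p‖ ∧
      (pdx f p * star (pdy f p)).re = 0) {p : ℝ × ℝ} (hp : p ∈ U) :
    pdx f p * pdy (unormal f) p - pdy f p * pdx (unormal f) p =
      -(pdx (fun q => pdx f q) p + pdy (fun q => pdy f q) p) := by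
  have hfd : ∀ q ∈ U, DifferentiableAt ℝ f q := fun q hq =>
    (hf.contDiffAt (hU.mem_nhds hq)).differentiableAt (by simp)
  have hn : ∀ q ∈ U, pdx f q * unormal f q = -pdy f q ∧ pdy f q * unormal f q = pdx f q := by
    intro q hq
    obtain ⟨h1, h2, h3⟩ := hconf q hq
    exact mul_normal_of_orthogonal (fderiv_re_eq_zero hU hfIm hq (hfd q hq) _)
      (fderiv_re_eq_zero hU hfIm hq (hfd q hq) _) h1 h2 h3
  have hfp : ContDiffAt ℝ ∞ f p := hf.contDiffAt (hU.mem_nhds hp)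
  have hD : DifferentiableAt ℝ (fderiv ℝ f) p :=
    (hfp.fderiv_right (m := 1) (by norm_cast)).differentiableAt (by simp)
  have ha : DifferentiableAt ℝ (pdx f) p := hD.clm_apply (differentiableAt_const _)
  have hb : DifferentiableAt ℝ (pdy f) p := hD.clm_apply (differentiableAt_const _)
  have hb0 : ∀ q ∈ U, pdy f q ≠ 0 := fun q hq => by
    obtain ⟨h1, h2, -⟩ := hconf q hq
    rw [← norm_pos_iff, ← h1]
    exact h2
  -- `b n = a` exhibits `n = b⁻¹ a`, hence `n` is differentiable
  have hnd : DifferentiableAt ℝ (unormal f) p := by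
    have h : DifferentiableAt ℝ (fun q => (pdy f q)⁻¹ * pdx f q) p :=
      (hb.inv (hb0 p hp)).mul ha
    refine h.congr_of_eventuallyEq ?_
    filter_upwards [hU.mem_nhds hp] with q hq
    rw [eq_inv_mul_iff_mul_eq₀ (hb0 q hq)]
    exact (hn q hq).2
  -- equality of mixed partial derivatives
  have hsymm : pdy (pdx f) p = pdx (pdy f) p := by
    have hs : IsSymmSndFDerivAt ℝ f p := hfp.isSymmSndFDerivAt (by simp; norm_cast)
    have h : ∀ v w : ℝ × ℝ,
        fderiv ℝ (fun q => fderiv ℝ f q v) p w = fderiv ℝ (fderiv ℝ f) p w v := fun v w => by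
      rw [fderiv_clm_apply hD (differentiableAt_const _)]
      simp
    exact (h _ _).trans ((hs.eq _ _).trans (h _ _).symm)
  have e1 : pdx f p * pdy (unormal f) p + pdy (pdx f) p * unormal f p = -pdy (pdy f) p := by
    have h : (fun q => pdx f q * unormal f q) =ᶠ[nhds p] fun q => -pdy f q := by
      filter_upwards [hU.mem_nhds hp] with q hq using (hn q hq).1
    have h' := DFunLike.congr_fun (h.fderiv_eq (𝕜 := ℝ)) ((0, 1) : ℝ × ℝ)
    rw [fderiv_fun_mul' ha hnd, fderiv_fun_neg] at h'
    exact h'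
  have e2 : pdy f p * pdx (unormal f) p + pdx (pdy f) p * unormal f p = pdx (pdx f) p := by
    have h : (fun q => pdy f q * unormal f q) =ᶠ[nhds p] fun q => pdx f q := by
      filter_upwards [hU.mem_nhds hp] with q hq using (hn q hq).2
    have h' := DFunLike.congr_fun (h.fderiv_eq (𝕜 := ℝ)) ((1, 0) : ℝ × ℝ)
    rw [fderiv_fun_mul' hb hnd] at h'
    exact h'
  rw [hsymm] at e1
  change _ = -(pdx (pdx f) p + pdy (pdy f) p)
  rw [eq_sub_of_add_eq e1, eq_sub_of_add_eq e2]
  abel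

theorem minimal_iff_gauss_map_is_christoffel_transform
    (U : Set (ℝ × ℝ)) (hU : IsOpen U) (f : ℝ × ℝ → HQ)
    (hf : ContDiffOn ℝ ∞ f U) (hfIm : ∀ p ∈ U, (f p).re = 0)
    (hconf : ∀ p ∈ U, ‖pdx f p‖ = ‖pdy f p‖ ∧ 0 < ‖pdx f p‖ ∧
      (pdx f p * star (pdy f p)).re = 0) :
    (∀ p ∈ U, pdx f p * pdy (unormal f) p = pdy f p * pdx (unormal f) p) ↔
    (∀ p ∈ U, pdx (fun q => pdx f q) p + pdy (fun q => pdy f q) p = 0) := by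
  refine forall₂_congr fun p hp => ?_
  rw [← sub_eq_zero, christoffel_defect hU hf hfIm hconf hp, neg_eq_zero]

end
end
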